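/- arXiv:2403.18497 — 6 statements merged into one kernel-verified Lean document; each statement's English description precedes it below -/
import Mathlib

section
/- Let (G, w, k) be a yes-instance of minimum sum vertex cover. Then the number of vertices of G whose degree exceeds k is at most k; equivalently, if more than k vertices of G have degree greater than k, then (G, w, k) admits no feasible solution. -/
/-!
If every edge costs at most `k`, the vertices in the first `k` positions form a vertex cover.
A vertex outside this cover has all its neighbours inside it, hence degree at most `k`
(`card_filter_pos_lt_le`). So every vertex of degree greater than `k` is among the first `k`.
-/

/-- The 1-indexed cost of an edge under an ordering `σ` of the vertices. -/
def edgeCost {V : Type*} [Fintype V] (σ : V ≃ Fin (Fintype.card V)) : Sym2 V → ℕ :=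
  Sym2.lift ⟨fun u v => min ((σ u : ℕ) + 1) ((σ v : ℕ) + 1), fun u v => by
    simp [min_comm]⟩

/-- The total cost of a solution `σ`: the sum of the costs of all edges. -/
def totalCost {V : Type*} [Fintype V] [DecidableEq V] (G : SimpleGraph V)
    [DecidableRel G.Adj] (σ : V ≃ Fin (Fintype.card V)) : ℕ :=
  ∑ e ∈ G.edgeFinset, edgeCost σ e

/-- The maximum cost of the solution `σ` is at most `k`. -/
def MaxCostLe {V : Type*} [Fintype V] (G : SimpleGraph V)
    (σ : V ≃ Fin (Fintype.card V)) (k : ℕ) : Prop :=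
  ∀ ⦃u v : V⦄, G.Adj u v → min ((σ u : ℕ) + 1) ((σ v : ℕ) + 1) ≤ k

/-- A solution `σ` is feasible for `(G, w, k)` if its maximum cost is at most `k`
and its total cost is at most `w`. -/
def Feasible {V : Type*} [Fintype V] [DecidableEq V] (G : SimpleGraph V)
    [DecidableRel G.Adj] (σ : V ≃ Fin (Fintype.card V)) (w k : ℕ) : Prop :=
  MaxCostLe G σ k ∧ totalCost G σ ≤ w

/-- `(G, w, k)` is a yes-instance if it admits a feasible solution. -/
def YesInstance {V : Type*} [Fintype V] [DecidableEq V] (G : SimpleGraph V)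
    [DecidableRel G.Adj] (w k : ℕ) : Prop :=
  ∃ σ : V ≃ Fin (Fintype.card V), Feasible G σ w k

/-- A solution `σ` is optimal for parameter `k` if its maximum cost is at most `k`
and its total cost is minimum among all solutions with maximum cost at most `k`. -/
def Optimal {V : Type*} [Fintype V] [DecidableEq V] (G : SimpleGraph V)
    [DecidableRel G.Adj] (σ : V ≃ Fin (Fintype.card V)) (k : ℕ) : Prop :=
  MaxCostLe G σ k ∧
    ∀ σ' : V ≃ Fin (Fintype.card V), MaxCostLe G σ' k → totalCost G σ ≤ totalCost G σ'

/-- `r G σ i` is the number of edges of cost `i` (where the position `i` is 0-indexed as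
an element of `Fin n`): the number of neighbors of the vertex at position `i` that occur
at later positions. -/
def r {V : Type*} [Fintype V] (G : SimpleGraph V) [DecidableRel G.Adj]
    (σ : V ≃ Fin (Fintype.card V)) (i : Fin (Fintype.card V)) : ℕ :=
  ((G.neighborFinset (σ.symm i)).filter fun x => i < σ x).card

/-- At most `k` vertices occupy the first `k` positions of an ordering. -/
lemma card_filter_pos_lt_le {V : Type*} [Fintype V] (σ : V ≃ Fin (Fintype.card V)) (k : ℕ) :
    (Finset.univ.filter fun v : V => (σ v : ℕ) < k).card ≤ k := by
  have h := Finset.card_le_card_of_injOn (s := Finset.univ.filter fun v : V => (σ v : ℕ) < k)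
    (t := Finset.range k) (fun v => (σ v : ℕ)) (by intro v hv; simpa using hv)
    (fun a _ b _ hab => σ.injective (Fin.ext hab))
  simpa using h

/-- if `(G, w, k)` is a yes-instance, then at most `k` vertices of `G`
have degree greater than `k`. -/
theorem statement3 {V : Type*} [Fintype V] [DecidableEq V] (G : SimpleGraph V)
    [DecidableRel G.Adj] (w k : ℕ) (hyes : YesInstance G w k) :
    (Finset.univ.filter fun v : V => k < G.degree v).card ≤ k := by
  obtain ⟨σ, hmax, -⟩ := hyes
  refine (Finset.card_le_card ?_).trans (card_filter_pos_lt_le σ k)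
  intro v hv
  simp only [Finset.mem_filter, Finset.mem_univ, true_and] at hv ⊢
  by_contra hpos
  -- If `v` comes after the first `k` positions, all its neighbours lie among them.
  have hsub : G.neighborFinset v ⊆ Finset.univ.filter fun u : V => (σ u : ℕ) < k := by
    intro u hu
    have hcost := hmax ((G.mem_neighborFinset v u).1 hu)
    simp only [Finset.mem_filter, Finset.mem_univ, true_and]
    omega
  have hdeg := (Finset.card_le_card hsub).trans (card_filter_pos_lt_le σ k)
  rw [G.card_neighborFinset_eq_degree] at hdeg
  omega
end

section
/- Let (G, w, k) be a yes-instance of minimum sum vertex cover and let σ be an optimal solution of (G, w, k). For any pair of vertices u and v of G, if σ(u) < σ(v), then r_σ(σ(u)) ≥ r_σ(σ(v)). In other words, in an optimal solution the numbers r_σ(1), r_σ(2), …, r_σ(n) are non-increasing. -/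
lemma edgeCost_mk {V : Type*} [Fintype V] (σ : V ≃ Fin (Fintype.card V)) (x y : V) :
    edgeCost σ s(x, y) = min ((σ x : ℕ) + 1) ((σ y : ℕ) + 1) :=
  rfl

/-- `r G σ i` is the number of edges of cost `i + 1`: an edge has this cost exactly when it joins
the vertex at position `i` to a vertex at a later position. -/
lemma r_eq_card_cost {V : Type*} [Fintype V] [DecidableEq V] (G : SimpleGraph V)
    [DecidableRel G.Adj] (σ : V ≃ Fin (Fintype.card V)) (i : Fin (Fintype.card V)) :
    r G σ i = (G.edgeFinset.filter fun e => edgeCost σ e = (i : ℕ) + 1).card := by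
  unfold r
  refine Finset.card_bij (fun x _ => s(σ.symm i, x)) ?_ ?_ ?_
  · intro x hx
    simp only [Finset.mem_filter, SimpleGraph.mem_neighborFinset, Fin.lt_def] at hx
    simp only [Finset.mem_filter, SimpleGraph.mem_edgeFinset, SimpleGraph.mem_edgeSet,
      edgeCost_mk, Equiv.apply_symm_apply]
    exact ⟨hx.1, by omega⟩
  · intro x _ y _ h
    exact Sym2.congr_right.mp h
  · intro e
    induction e with | _ x y
    intro he
    simp only [Finset.mem_filter, SimpleGraph.mem_edgeFinset, SimpleGraph.mem_edgeSet,
      edgeCost_mk] at he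
    obtain ⟨hadj, hcost⟩ := he
    have hne : (σ x : ℕ) ≠ σ y := fun h => hadj.ne (σ.injective (Fin.ext h))
    rcases lt_or_gt_of_ne hne with hlt | hlt
    · have hx : σ x = i := Fin.ext (by omega)
      subst hx
      exact ⟨y, by simpa [hadj] using hlt, by simp⟩
    · have hy : σ y = i := Fin.ext (by omega)
      subst hy
      exact ⟨x, by simpa [hadj.symm] using hlt, by simp [Sym2.eq_swap]⟩

/-- The effect on the cost of an edge of exchanging two adjacent positions. -/
lemma edgeCost_swap_le {V : Type*} [Fintype V] (G : SimpleGraph V)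
    (σ : V ≃ Fin (Fintype.card V)) (i j : Fin (Fintype.card V)) (hij : (j : ℕ) = i + 1)
    (e : Sym2 V) (he : e ∈ G.edgeSet) :
    edgeCost (σ.trans (Equiv.swap i j)) e + (if edgeCost σ e = (j : ℕ) + 1 then 1 else 0)
      ≤ edgeCost σ e + (if edgeCost σ e = (i : ℕ) + 1 then 1 else 0) := by
  induction e with | _ x y
  have hadj : G.Adj x y := he
  have hne : (σ x : ℕ) ≠ σ y := fun h => hadj.ne (σ.injective (Fin.ext h))
  have hswap : ∀ p : Fin (Fintype.card V), ((Equiv.swap i j p : Fin _) : ℕ) =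
      if (p : ℕ) = i then (j : ℕ) else if (p : ℕ) = j then (i : ℕ) else p := by
    intro p
    simp only [Equiv.swap_apply_def, Fin.ext_iff]
    split_ifs <;> rfl
  have hx := hswap (σ x)
  have hy := hswap (σ y)
  rw [edgeCost_mk, edgeCost_mk, Equiv.trans_apply, Equiv.trans_apply, hx, hy]
  clear hx hy hswap
  split_ifs <;> omega

/-- In an optimal solution, `r` does not increase from one position to the next. -/
lemma r_adjacent {V : Type*} [Fintype V] [DecidableEq V] (G : SimpleGraph V)
    [DecidableRel G.Adj] (k : ℕ) (σ : V ≃ Fin (Fintype.card V)) (hopt : Optimal G σ k)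
    (i j : Fin (Fintype.card V)) (hij : (j : ℕ) = i + 1) : r G σ j ≤ r G σ i := by
  by_contra! hlt
  obtain ⟨hmax, hmin⟩ := hopt
  have hcost : ∀ e ∈ G.edgeSet, edgeCost σ e ≤ k := by
    intro e
    induction e with | _ x y
    exact fun h => hmax h
  have hjk : (j : ℕ) + 1 ≤ k := by
    have hpos : 0 < r G σ j := by omega
    rw [r_eq_card_cost, Finset.card_pos] at hpos
    obtain ⟨e, he⟩ := hpos
    rw [Finset.mem_filter, SimpleGraph.mem_edgeFinset] at he
    exact he.2 ▸ hcost e he.1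
  have hmax' : MaxCostLe G (σ.trans (Equiv.swap i j)) k := by
    intro x y hxy
    have h := edgeCost_swap_le G σ i j hij s(x, y) hxy
    have hk := hcost s(x, y) hxy
    change edgeCost (σ.trans (Equiv.swap i j)) s(x, y) ≤ k
    split_ifs at h <;> omega
  have hsum : totalCost G (σ.trans (Equiv.swap i j)) + r G σ j ≤ totalCost G σ + r G σ i := by
    rw [r_eq_card_cost, r_eq_card_cost, Finset.card_filter, Finset.card_filter, totalCost,
      totalCost, ← Finset.sum_add_distrib, ← Finset.sum_add_distrib]
    exact Finset.sum_le_sum fun e he =>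
      edgeCost_swap_le G σ i j hij e (SimpleGraph.mem_edgeFinset.mp he)
  have := hmin _ hmax'
  omega

/-- in an optimal solution `σ` of a yes-instance `(G, w, k)`,
if `σ(u) < σ(v)` then `r_σ(σ(u)) ≥ r_σ(σ(v))`; that is, the numbers `r_σ(·)` are
non-increasing. -/
theorem statement4 {V : Type*} [Fintype V] [DecidableEq V] (G : SimpleGraph V)
    [DecidableRel G.Adj] (w k : ℕ) (σ : V ≃ Fin (Fintype.card V))
    (hyes : YesInstance G w k) (hopt : Optimal G σ k) :
    ∀ u v : V, σ u < σ v → r G σ (σ v) ≤ r G σ (σ u) := by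
  have key : ∀ (d : ℕ) (i j : Fin (Fintype.card V)), (j : ℕ) = i + d → r G σ j ≤ r G σ i := by
    intro d
    induction d with
    | zero =>
      intro i j h
      rw [Fin.ext (h : (j : ℕ) = i)]
    | succ d ih =>
      intro i j h
      have hlt : (i : ℕ) + d < Fintype.card V := by omega
      exact (r_adjacent G k σ hopt ⟨i + d, hlt⟩ j h).trans (ih i ⟨i + d, hlt⟩ rfl)
  intro u v huv
  exact key ((σ v : ℕ) - σ u) (σ u) (σ v) (by rw [Fin.lt_def] at huv; omega)
end

section
/- Let (G, w, k) be a yes-instance of minimum sum vertex cover. Let V_{>k} = {v ∈ V(G) : d(v) > k} and let I be the set of vertices that are isolated in the induced subgraph G − V_{>k} (i.e., vertices all of whose neighbors lie in V_{>k}). Then the number of remaining vertices satisfies |V(G) \ (V_{>k} ∪ I)| ≤ (k − |V_{>k}|)(k + 1). -/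
/-- let `(G, w, k)` be a yes-instance, `Vgt` the set of vertices of degree
greater than `k`, and `I` the set of vertices isolated in `G − Vgt` (all their neighbors
lie in `Vgt`).  Then the number of remaining vertices is at most
`(k − |Vgt|)(k + 1)`. -/
theorem statement8 {V : Type*} [Fintype V] [DecidableEq V] (G : SimpleGraph V)
    [DecidableRel G.Adj] (w k : ℕ) (hyes : YesInstance G w k) :
    letI Vgt := Finset.univ.filter fun v : V => k < G.degree v
    letI I := Finset.univ.filter fun v : V => v ∉ Vgt ∧ ∀ x : V, G.Adj v x → x ∈ Vgt
    (Finset.univ \ (Vgt ∪ I)).card ≤ (k - Vgt.card) * (k + 1) := by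
  set Vgt := Finset.univ.filter fun v : V => k < G.degree v
  set I := Finset.univ.filter fun v : V => v ∉ Vgt ∧ ∀ x : V, G.Adj v x → x ∈ Vgt
  obtain ⟨σ, hmax, -⟩ := hyes
  -- positions are 0-indexed, so the first `k` vertices are those with `σ v < k`
  set C : Finset V := Finset.univ.filter fun v : V => (σ v : ℕ) < k with hC
  have hcover : ∀ u v : V, G.Adj u v → u ∈ C ∨ v ∈ C := by
    intro u v huv
    have h := hmax huv
    simp only [hC, Finset.mem_filter, Finset.mem_univ, true_and]
    omega
  have hCcard : C.card ≤ k := by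
    have h : C.card ≤ (Finset.range k).card := by
      apply Finset.card_le_card_of_injOn (fun v => (σ v : ℕ))
      · intro v hv
        have hv' : v ∈ C := hv
        simpa [hC] using hv'
      · intro u _ v _ huv
        exact σ.injective (Fin.ext huv)
    simpa using h
  have hsub : Vgt ⊆ C := by
    intro v hv
    have hdeg : k < G.degree v := (Finset.mem_filter.mp hv).2
    by_contra hvC
    have hN : G.neighborFinset v ⊆ C := by
      intro x hx
      exact (hcover v x ((G.mem_neighborFinset v x).mp hx)).resolve_left hvC
    have h := Finset.card_le_card hN
    rw [G.card_neighborFinset_eq_degree] at h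
    omega
  have hrest : Finset.univ \ (Vgt ∪ I) ⊆
      (C \ Vgt).biUnion fun v => insert v (G.neighborFinset v) := by
    intro v hv
    simp only [Finset.mem_sdiff, Finset.mem_univ, true_and, Finset.mem_union, not_or] at hv
    obtain ⟨hvV, hvI⟩ := hv
    have hex : ∃ x, G.Adj v x ∧ x ∉ Vgt := by
      by_contra! hno
      exact hvI (Finset.mem_filter.mpr ⟨Finset.mem_univ v, hvV, hno⟩)
    obtain ⟨x, hvx, hxV⟩ := hex
    rw [Finset.mem_biUnion]
    rcases hcover v x hvx with h | h
    · exact ⟨v, Finset.mem_sdiff.mpr ⟨h, hvV⟩, Finset.mem_insert_self _ _⟩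
    · exact ⟨x, Finset.mem_sdiff.mpr ⟨h, hxV⟩,
        Finset.mem_insert_of_mem ((G.mem_neighborFinset x v).mpr hvx.symm)⟩
  calc (Finset.univ \ (Vgt ∪ I)).card
      ≤ ((C \ Vgt).biUnion fun v => insert v (G.neighborFinset v)).card :=
        Finset.card_le_card hrest
    _ ≤ (C \ Vgt).card * (k + 1) := by
        apply Finset.card_biUnion_le_card_mul
        intro v hv
        have hvV := (Finset.mem_sdiff.mp hv).2
        have hdeg : G.degree v ≤ k := by
          by_contra! h
          exact hvV (Finset.mem_filter.mpr ⟨Finset.mem_univ v, h⟩)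
        have h := Finset.card_insert_le v (G.neighborFinset v)
        rw [G.card_neighborFinset_eq_degree] at h
        omega
    _ ≤ (k - Vgt.card) * (k + 1) := by
        rw [Finset.card_sdiff_of_subset hsub]
        gcongr
end

section
/- Let G be a finite simple graph with m edges and vertex cover number τ ≥ 1. Then G admits a solution σ whose maximum cost is at most τ and whose total cost is at most m(τ + 1)/2. -/
/-- `S` is a vertex cover of `G`: every edge has at least one end in `S`. -/
def IsVertexCover {V : Type*} (G : SimpleGraph V) (S : Finset V) : Prop :=
  ∀ ⦃u v : V⦄, G.Adj u v → u ∈ S ∨ v ∈ S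

/-- An enumeration of `S` extends to a solution in which `S` occupies the initial positions. -/
lemma exists_solution_extending {V : Type*} [Fintype V] [DecidableEq V] (S : Finset V) {τ : ℕ}
    (f : {x // x ∈ S} ≃ Fin τ) :
    ∃ σ : V ≃ Fin (Fintype.card V), ∀ v (h : v ∈ S), (σ v : ℕ) = f ⟨v, h⟩ := by
  let g := Fintype.equivFin {x // x ∉ S}
  let e : V ≃ Fin (τ + Fintype.card {x // x ∉ S}) :=
    (Equiv.sumCompl (· ∈ S)).symm.trans ((Equiv.sumCongr f g).trans finSumFinEquiv)
  have hn : τ + Fintype.card {x // x ∉ S} = Fintype.card V := by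
    simpa using (Fintype.card_congr e).symm
  refine ⟨e.trans (finCongr hn), fun v h => ?_⟩
  simp [e, Equiv.sumCompl_symm_apply_of_pos (p := (· ∈ S)) h]

lemma maxCostLe_of_extending {V : Type*} [Fintype V] {G : SimpleGraph V}
    {S : Finset V} (hS : IsVertexCover G S) {τ : ℕ} {f : {x // x ∈ S} → Fin τ}
    {σ : V ≃ Fin (Fintype.card V)} (hσ : ∀ v (h : v ∈ S), (σ v : ℕ) = f ⟨v, h⟩) :
    MaxCostLe G σ τ := by
  intro u v huv
  rcases hS huv with h | h
  · have := hσ u h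
    have := (f ⟨u, h⟩).isLt
    omega
  · have := hσ v h
    have := (f ⟨v, h⟩).isLt
    omega

/-- if `G` has `m` edges and vertex cover number `τ ≥ 1`, then `G` admits a
solution with maximum cost at most `τ` and total cost at most `m(τ + 1)/2`. -/
theorem statement12 {V : Type*} [Fintype V] [DecidableEq V] (G : SimpleGraph V)
    [DecidableRel G.Adj] (τ : ℕ) (S : Finset V)
    (hS : IsVertexCover G S) (hcard : S.card = τ)
    (hmin : ∀ T : Finset V, IsVertexCover G T → τ ≤ T.card) (hτ : 1 ≤ τ) :
    ∃ σ : V ≃ Fin (Fintype.card V),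
      MaxCostLe G σ τ ∧ 2 * totalCost G σ ≤ G.edgeFinset.card * (τ + 1) := by
  let f : {x // x ∈ S} ≃ Fin τ := S.equivFinOfCardEq hcard
  obtain ⟨σ, hσ⟩ := exists_solution_extending S f
  obtain ⟨σ', hσ'⟩ := exists_solution_extending S (f.trans Fin.revPerm)
  have hrev : ∀ v ∈ S, (σ v : ℕ) + 1 + ((σ' v : ℕ) + 1) = τ + 1 := by
    intro v h
    have h1 := hσ v h
    have h2 := hσ' v h
    have h3 := (f ⟨v, h⟩).isLt
    simp only [Equiv.trans_apply, Fin.revPerm_apply, Fin.val_rev] at h2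
    omega
  have hedge : ∀ e ∈ G.edgeFinset, edgeCost σ e + edgeCost σ' e ≤ τ + 1 := by
    intro e
    induction e using Sym2.ind with
    | _ u v =>
      intro he
      have huv : G.Adj u v := by simpa using he
      simp only [edgeCost, Sym2.lift_mk]
      rcases hS huv with h | h
      · have := hrev u h
        omega
      · have := hrev v h
        omega
  have hsum : totalCost G σ + totalCost G σ' ≤ G.edgeFinset.card * (τ + 1) := by
    rw [totalCost, totalCost, ← Finset.sum_add_distrib]
    simpa using Finset.sum_le_card_nsmul _ _ _ hedge
  rcases le_total (totalCost G σ) (totalCost G σ') with h | h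
  · exact ⟨σ, maxCostLe_of_extending hS hσ, by omega⟩
  · exact ⟨σ', maxCostLe_of_extending hS hσ', by omega⟩
end

section
/- Let G be a finite simple graph with n vertices, σ a solution of G, k a nonnegative integer, and S a vertex cover of G such that σ(v) ≤ k for every v ∈ S. Let p and i be positions with p ≤ k < i ≤ n such that the vertices σ⁻¹(p) and σ⁻¹(i) do not belong to S. For a vertex u, define s(u) = Σ_{x ∈ N(u), σ(x) > p} (σ(x) − p). Let σ' be the solution obtained from σ by swapping the positions of σ⁻¹(p) and σ⁻¹(i). Then the total cost of σ' equals the total cost of σ plus s(σ⁻¹(p)) − s(σ⁻¹(i)). In particular, if s(σ⁻¹(i)) ≥ s(σ⁻¹(p)), the total cost of σ' is at most that of σ. -/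
/-- `score G σ p u` is `s(u) = Σ_{x ∈ N(u), σ(x) > p} (σ(x) − p)`, the decrease in total
cost obtained by perching `u` at position `p` (positions as elements of `Fin n`). -/
def score {V : Type*} [Fintype V] [DecidableEq V] (G : SimpleGraph V)
    [DecidableRel G.Adj] (σ : V ≃ Fin (Fintype.card V)) (p : Fin (Fintype.card V))
    (u : V) : ℕ :=
  ∑ x ∈ (G.neighborFinset u).filter fun x => p < σ x, ((σ x : ℕ) - (p : ℕ))

/-- The contribution of an edge to `score G σ p u`: it is `σ x - p` (truncated) on the edge `u x`
and `0` on an edge not containing `u`. -/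
def edgeScore {V : Type*} [Fintype V] [DecidableEq V] (σ : V ≃ Fin (Fintype.card V))
    (p : Fin (Fintype.card V)) (u : V) : Sym2 V → ℕ :=
  Sym2.lift ⟨fun x y => (if x = u then (σ y : ℕ) - p else 0) + (if y = u then (σ x : ℕ) - p else 0),
    fun _ _ => add_comm _ _⟩

theorem sum_edgeScore {V : Type*} [Fintype V] [DecidableEq V] (G : SimpleGraph V)
    [DecidableRel G.Adj] (σ : V ≃ Fin (Fintype.card V)) (p : Fin (Fintype.card V)) (u : V) :
    ∑ e ∈ G.edgeFinset, edgeScore σ p u e = score G σ p u := by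
  -- The filter `p < σ x` in `score` only removes terms that truncated subtraction makes zero.
  have hscore : score G σ p u = ∑ x ∈ G.neighborFinset u, ((σ x : ℕ) - (p : ℕ)) := by
    unfold score
    refine Finset.sum_filter_of_ne fun x _ hx => ?_
    rw [Fin.lt_def]
    omega
  have himage : ∑ e ∈ (G.neighborFinset u).image (fun x => s(u, x)), edgeScore σ p u e
      = ∑ x ∈ G.neighborFinset u, ((σ x : ℕ) - (p : ℕ)) := by
    rw [Finset.sum_image (fun x _ y _ h => Sym2.congr_right.mp h)]
    refine Finset.sum_congr rfl fun x hx => ?_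
    have hne : x ≠ u := ((G.mem_neighborFinset u x).mp hx).ne'
    simp [edgeScore, hne]
  rw [hscore, ← himage]
  symm
  refine Finset.sum_subset ?_ ?_
  · intro e he
    obtain ⟨x, hx, rfl⟩ := Finset.mem_image.mp he
    simpa using hx
  · intro e he hne
    induction e using Sym2.ind with
    | _ x y =>
      have hadj : G.Adj x y := by simpa using he
      have hx : x ≠ u := by
        rintro rfl
        exact hne (Finset.mem_image.mpr ⟨y, by simpa using hadj, rfl⟩)
      have hy : y ≠ u := by
        rintro rfl
        exact hne (Finset.mem_image.mpr ⟨x, by simpa using hadj.symm, Sym2.eq_swap⟩)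
      simp [edgeScore, hx, hy]

/-- let `S` be a vertex cover of `G` contained in the first `k` positions of
a solution `σ`, and let `p ≤ k < i` be positions (1-indexed) whose vertices `σ⁻¹(p)` and
`σ⁻¹(i)` do not belong to `S`.  If `σ'` is obtained from `σ` by swapping the vertices at
positions `p` and `i`, then `totalCost σ' = totalCost σ + s(σ⁻¹(p)) − s(σ⁻¹(i))`
(stated additively to avoid truncated subtraction); in particular, if
`s(σ⁻¹(i)) ≥ s(σ⁻¹(p))` then the total cost of `σ'` is at most that of `σ`. -/
theorem statement13 {V : Type*} [Fintype V] [DecidableEq V] (G : SimpleGraph V)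
    [DecidableRel G.Adj] (k : ℕ) (σ : V ≃ Fin (Fintype.card V)) (S : Finset V)
    (hS : IsVertexCover G S) (hSk : ∀ v ∈ S, (σ v : ℕ) + 1 ≤ k)
    (p i : Fin (Fintype.card V)) (hpk : (p : ℕ) + 1 ≤ k) (hki : k < (i : ℕ) + 1)
    (hpS : σ.symm p ∉ S) (hiS : σ.symm i ∉ S) :
    totalCost G (σ.trans (Equiv.swap p i)) + score G σ p (σ.symm i)
        = totalCost G σ + score G σ p (σ.symm p) ∧
      (score G σ p (σ.symm p) ≤ score G σ p (σ.symm i) →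
        totalCost G (σ.trans (Equiv.swap p i)) ≤ totalCost G σ) := by
  have hpi : p < i := by
    rw [Fin.lt_def]
    omega
  have hedge : ∀ e ∈ G.edgeFinset,
      edgeCost (σ.trans (Equiv.swap p i)) e + edgeScore σ p (σ.symm i) e
        = edgeCost σ e + edgeScore σ p (σ.symm p) e := by
    intro e he
    induction e using Sym2.ind with
    | _ x y =>
      have hadj : G.Adj x y := by simpa using he
      -- Both sides are symmetric in the ends of the edge, so one end may be taken in `S`.
      wlog hx : x ∈ S generalizing x y
      · rw [Sym2.eq_swap]
        exact this y x (by simpa using hadj.symm) hadj.symm ((hS hadj).resolve_left hx)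
      have hxk := hSk x hx
      have hxa : x ≠ σ.symm p := fun h => hpS (h ▸ hx)
      have hxb : x ≠ σ.symm i := fun h => hiS (h ▸ hx)
      have hxa' : σ x ≠ p := fun h => hxa (σ.eq_symm_apply.mpr h)
      have hxb' : σ x ≠ i := fun h => hxb (σ.eq_symm_apply.mpr h)
      have hxswap : Equiv.swap p i (σ x) = σ x := Equiv.swap_apply_of_ne_of_ne hxa' hxb'
      have hab : σ.symm p ≠ σ.symm i := fun h => hpi.ne (σ.symm.injective h)
      by_cases hya : y = σ.symm p
      · subst hya
        simp only [edgeCost, edgeScore, Sym2.lift_mk, Equiv.trans_apply, Equiv.apply_symm_apply,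
          Equiv.swap_apply_left, hxswap, if_neg hxa, if_neg hxb, if_neg hab, if_true]
        omega
      · by_cases hyb : y = σ.symm i
        · subst hyb
          simp only [edgeCost, edgeScore, Sym2.lift_mk, Equiv.trans_apply, Equiv.apply_symm_apply,
            Equiv.swap_apply_right, hxswap, if_neg hxa, if_neg hxb, if_neg hya, if_true]
          omega
        · have hyswap : Equiv.swap p i (σ y) = σ y :=
            Equiv.swap_apply_of_ne_of_ne (fun h => hya (σ.eq_symm_apply.mpr h))
              (fun h => hyb (σ.eq_symm_apply.mpr h))
          simp only [edgeCost, edgeScore, Sym2.lift_mk, Equiv.trans_apply, hxswap, hyswap,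
            if_neg hxa, if_neg hxb, if_neg hya, if_neg hyb]
  have hmain : totalCost G (σ.trans (Equiv.swap p i)) + score G σ p (σ.symm i)
      = totalCost G σ + score G σ p (σ.symm p) := by
    rw [← sum_edgeScore, ← sum_edgeScore, totalCost, totalCost, ← Finset.sum_add_distrib,
      ← Finset.sum_add_distrib]
    exact Finset.sum_congr rfl hedge
  exact ⟨hmain, fun h => by omega⟩
end

section
/- A finite simple graph has at most 2^k minimal vertex covers of size at most k. -/
/-- The branching bound, with `A` the partial cover already chosen and `k` the remaining budget. -/
lemma ncard_minimal_covers_above_le {V : Type*} [Fintype V] [DecidableEq V] (G : SimpleGraph V)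
    (k : ℕ) : ∀ A : Finset V,
    {S : Finset V | (IsVertexCover G S ∧ ∀ T : Finset V, T ⊂ S → ¬ IsVertexCover G T) ∧
      A ⊆ S ∧ S.card ≤ A.card + k}.ncard ≤ 2 ^ k := by
  induction k with
  | zero =>
    intro A
    refine (Set.ncard_le_ncard (t := {A}) ?_ (Set.toFinite _)).trans (by simp)
    rintro S ⟨-, hAS, hc⟩
    exact (Finset.eq_of_subset_of_card_le hAS hc).symm
  | succ k ih =>
    intro A
    by_cases hA : IsVertexCover G A
    · refine (Set.ncard_le_ncard (t := {A}) ?_ (Set.toFinite _)).trans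
        (by simpa using Nat.one_le_two_pow)
      rintro S ⟨⟨-, hmin⟩, hAS, -⟩
      by_contra hne
      exact hmin A (hAS.ssubset_of_ne fun h => hne h.symm) hA
    · simp only [IsVertexCover, not_forall, not_or] at hA
      obtain ⟨u, v, huv, hu, hv⟩ := hA
      have hcu := Finset.card_insert_of_notMem hu
      have hcv := Finset.card_insert_of_notMem hv
      have hdouble := add_le_add (ih (insert u A)) (ih (insert v A))
      rw [← two_mul, ← pow_succ'] at hdouble
      refine le_trans (le_trans (Set.ncard_le_ncard ?_ (Set.toFinite _))
        (Set.ncard_union_le _ _)) hdouble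
      rintro S ⟨hS, hAS, hc⟩
      rcases hS.1 huv with h | h
      · exact Or.inl ⟨hS, Finset.insert_subset h hAS, by omega⟩
      · exact Or.inr ⟨hS, Finset.insert_subset h hAS, by omega⟩

/-- a finite simple graph has at most `2^k` minimal vertex covers of size
at most `k`. -/
theorem statement14 {V : Type*} [Fintype V] [DecidableEq V] (G : SimpleGraph V) (k : ℕ) :
    {S : Finset V | (IsVertexCover G S ∧ ∀ T : Finset V, T ⊂ S → ¬ IsVertexCover G T) ∧
      S.card ≤ k}.ncard ≤ 2 ^ k := by
  simpa using ncard_minimal_covers_above_le G k ∅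
end
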